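/- Let d ≥ 1 and s ∈ (0,1). Then there exists a constant C = C(d,s) > 0 such that for every Schwartz function u : ℝ^d → ℂ one has the identity ∫_{ℝ^d}∫_{ℝ^d} |u(x)−u(y)|²/‖x−y‖^{d+2s} dx dy = C · ∫_{ℝ^d} ‖ξ‖^{2s} |(𝓕u)(ξ)|² dξ. -/

import Mathlib

open MeasureTheory
open scoped RealInnerProductSpace

/-- Fourier transform `(𝓕u)(ξ) = ∫ e^{-2πi x·ξ} u(x) dx`. -/
noncomputable def FT {d : ℕ} (u : EuclideanSpace ℝ (Fin d) → ℂ)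
    (ξ : EuclideanSpace ℝ (Fin d)) : ℂ :=
  ∫ x : EuclideanSpace ℝ (Fin d),
    Complex.exp ((-(2 * Real.pi * ⟪x, ξ⟫) : ℝ) * Complex.I) * u x

open scoped FourierTransform ENNReal

noncomputable def kq (t : ℝ) : ℝ := ‖Complex.exp (Complex.I * ((-(2 * Real.pi * t) : ℝ) : ℂ)) - 1‖ ^ 2

lemma kq_nonneg (t : ℝ) : 0 ≤ kq t := by unfold kq; positivity

lemma kq_cont : Continuous kq := by unfold kq; fun_prop

lemma kq_le_sq (t : ℝ) : kq t ≤ (2 * Real.pi) ^ 2 * t ^ 2 := by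
  unfold kq
  have h := Real.norm_exp_I_mul_ofReal_sub_one_le (x := -(2 * Real.pi * t))
  calc _ ≤ ‖-(2 * Real.pi * t)‖ ^ 2 := by gcongr
    _ = _ := by rw [Real.norm_eq_abs, sq_abs]; ring

lemma kq_le_four (t : ℝ) : kq t ≤ 4 := by
  unfold kq
  have h : ‖Complex.exp (Complex.I * ((-(2 * Real.pi * t) : ℝ) : ℂ)) - 1‖ ≤ 2 := by
    refine (norm_sub_le _ _).trans ?_
    rw [Complex.norm_exp_I_mul_ofReal]; norm_num
  calc _ ≤ (2:ℝ) ^ 2 := by gcongr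
    _ = 4 := by norm_num

lemma kq_pos {t : ℝ} (h0 : 0 < t) (h1 : t < 1) : 0 < kq t := by
  unfold kq
  rw [Complex.norm_exp_I_mul_ofReal_sub_one]
  have : Real.sin (-(2 * Real.pi * t) / 2) ≠ 0 := by
    have := Real.sin_pos_of_pos_of_lt_pi (x := Real.pi * t) (by positivity)
      (by nlinarith [Real.pi_pos])
    rw [show -(2 * Real.pi * t) / 2 = - (Real.pi * t) by ring, Real.sin_neg]
    linarith
  have h2 : (2 * Real.sin (-(2 * Real.pi * t) / 2)) ≠ 0 := by simpa using this
  exact pow_pos (norm_pos_iff.2 h2) 2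

noncomputable def KK (d : ℕ) (s : ℝ) (ξ : EuclideanSpace ℝ (Fin d)) : ℝ≥0∞ :=
  ∫⁻ h : EuclideanSpace ℝ (Fin d), ENNReal.ofReal (kq ⟪h, ξ⟫ * (‖h‖ ^ ((d : ℝ) + 2 * s))⁻¹)

lemma KK_congr_norm {d : ℕ} (s : ℝ) {v w : EuclideanSpace ℝ (Fin d)} (h : ‖v‖ = ‖w‖) :
    KK d s v = KK d s w := by
  unfold KK
  set R := (Submodule.span ℝ {v - w})ᗮ.reflection with hR
  have hRv : R v = w := Submodule.reflection_sub h
  have mp := R.measurePreserving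
  symm
  rw [← mp.lintegral_comp_emb R.toHomeomorph.measurableEmbedding]
  refine lintegral_congr fun x => ?_
  rw [← hRv, R.inner_map_map, R.norm_map]

lemma KK_smul {d : ℕ} (s : ℝ) {r : ℝ} (hr : 0 < r) (v : EuclideanSpace ℝ (Fin d)) :
    KK d s (r • v) = ENNReal.ofReal (r ^ (2 * s)) * KK d s v := by
  unfold KK
  set F : EuclideanSpace ℝ (Fin d) → ℝ≥0∞ :=
    fun h => ENNReal.ofReal (kq ⟪h, v⟫ * (‖h‖ ^ ((d : ℝ) + 2 * s))⁻¹) with hF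
  have hFm : Measurable F := by
    have := kq_cont.measurable
    fun_prop
  have e1 : ∀ h : EuclideanSpace ℝ (Fin d),
      ENNReal.ofReal (kq ⟪h, r • v⟫ * (‖h‖ ^ ((d : ℝ) + 2 * s))⁻¹)
        = ENNReal.ofReal (r ^ ((d : ℝ) + 2 * s)) * F (r • h) := by
    intro h
    rw [hF, ← ENNReal.ofReal_mul (by positivity)]
    congr 1
    rw [norm_smul, Real.norm_of_nonneg hr.le, Real.mul_rpow hr.le (norm_nonneg _), mul_inv,
      inner_smul_right, inner_smul_left]
    have : r ^ ((d : ℝ) + 2 * s) ≠ 0 := by positivity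
    simp only [conj_trivial]
    field_simp
  simp_rw [e1]
  rw [lintegral_const_mul _ (by fun_prop)]
  rw [← lintegral_map hFm (measurable_const_smul r), Measure.map_addHaar_smul _ hr.ne',
    lintegral_smul_measure, smul_eq_mul, ← mul_assoc, ← ENNReal.ofReal_mul (by positivity)]
  congr 2
  rw [abs_of_pos (by positivity), Real.rpow_add hr, Real.rpow_natCast, finrank_euclideanSpace_fin]
  field_simp

lemma KK_lt_top {d : ℕ} (hd : 1 ≤ d) {s : ℝ} (hs : s ∈ Set.Ioo (0 : ℝ) 1)
    (ξ : EuclideanSpace ℝ (Fin d)) : KK d s ξ < ⊤ := by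
  obtain ⟨hs0, hs1⟩ := hs
  set A : ℝ := (2 * Real.pi) ^ 2 * ‖ξ‖ ^ 2 with hA
  have hA0 : 0 ≤ A := by positivity
  set g : ℝ → ℝ := fun r => min 4 (A * r ^ 2) * (r ^ ((d : ℝ) + 2 * s))⁻¹ with hg
  have : Nonempty (Fin d) := ⟨⟨0, hd⟩⟩
  have hgi : Integrable (fun h : EuclideanSpace ℝ (Fin d) => g ‖h‖) := by
    rw [integrable_fun_norm_addHaar, finrank_euclideanSpace_fin]
    have hgm : Measurable (fun y : ℝ => y ^ (d - 1) • g y) := by fun_prop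
    have key : ∀ y : ℝ, 0 < y → y ^ (d - 1) * (y ^ ((d : ℝ) + 2 * s))⁻¹ = y ^ (-1 - 2 * s) := by
      intro y hy
      rw [← Real.rpow_neg hy.le, ← Real.rpow_natCast, ← Real.rpow_add hy]
      congr 1
      push_cast [Nat.cast_sub hd]
      ring
    rw [← Set.Ioo_union_Ici_eq_Ioi (zero_lt_one), integrableOn_union]
    constructor
    · have : IntegrableOn (fun y : ℝ => A * y ^ (1 - 2 * s)) (Set.Ioo 0 1) :=
        ((intervalIntegral.integrableOn_Ioo_rpow_iff zero_lt_one).2 (by linarith)).const_mul _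
      refine Integrable.mono' this hgm.aestronglyMeasurable ?_
      refine (ae_restrict_iff' measurableSet_Ioo).2 (.of_forall fun y hy => ?_)
      have hy0 := hy.1
      rw [Real.norm_of_nonneg (by positivity), smul_eq_mul, hg]
      calc _ = min 4 (A * y ^ 2) * (y ^ (d - 1) * (y ^ ((d : ℝ) + 2 * s))⁻¹) := by ring
        _ ≤ (A * y ^ 2) * (y ^ (-1 - 2 * s)) := by
          rw [key y hy0]; gcongr; exact min_le_right _ _
        _ = _ := by
          rw [mul_assoc, ← Real.rpow_natCast y 2, ← Real.rpow_add hy0]; congr 2; push_cast; ring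
    · have : IntegrableOn (fun y : ℝ => 4 * y ^ (-1 - 2 * s)) (Set.Ici 1) := by
        rw [integrableOn_Ici_iff_integrableOn_Ioi]
        exact ((integrableOn_Ioi_rpow_iff zero_lt_one).2 (by linarith)).const_mul _
      refine Integrable.mono' this hgm.aestronglyMeasurable ?_
      refine (ae_restrict_iff' measurableSet_Ici).2 (.of_forall fun y hy => ?_)
      have hy0 : 0 < y := lt_of_lt_of_le one_pos hy
      rw [Real.norm_of_nonneg (by positivity), smul_eq_mul, hg]
      calc _ = min 4 (A * y ^ 2) * (y ^ (d - 1) * (y ^ ((d : ℝ) + 2 * s))⁻¹) := by ring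
        _ ≤ _ := by
          rw [key y hy0]; gcongr; exact min_le_left _ _
  refine lt_of_le_of_lt (lintegral_mono fun h => ENNReal.ofReal_le_ofReal ?_)
    hgi.lintegral_lt_top
  rw [hg]
  refine mul_le_mul_of_nonneg_right (le_min (kq_le_four _) ?_) (by positivity)
  refine (kq_le_sq _).trans ?_
  rw [hA, mul_assoc]
  refine mul_le_mul_of_nonneg_left ?_ (by positivity)
  rw [← mul_pow, ← sq_abs]
  have := abs_real_inner_le_norm h ξ
  gcongr
  linarith

lemma KK_pos {d : ℕ} (s : ℝ) {e : EuclideanSpace ℝ (Fin d)} (he : ‖e‖ = 1) :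
    0 < KK d s e := by
  unfold KK
  have hm : Measurable (fun h : EuclideanSpace ℝ (Fin d) =>
      ENNReal.ofReal (kq ⟪h, e⟫ * (‖h‖ ^ ((d : ℝ) + 2 * s))⁻¹)) := by
    have := kq_cont.measurable
    fun_prop
  rw [lintegral_pos_iff_support hm]
  have ho : IsOpen {h : EuclideanSpace ℝ (Fin d) | 0 < ⟪h, e⟫ ∧ ⟪h, e⟫ < 1} :=
    IsOpen.and (isOpen_lt (by fun_prop) (by fun_prop)) (isOpen_lt (by fun_prop) (by fun_prop))
  have hne : {h : EuclideanSpace ℝ (Fin d) | 0 < ⟪h, e⟫ ∧ ⟪h, e⟫ < 1}.Nonempty := by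
    refine ⟨(1/2 : ℝ) • e, ?_⟩
    simp only [Set.mem_ofPred_eq, inner_smul_left, real_inner_self_eq_norm_sq, he]
    norm_num
  refine lt_of_lt_of_le (ho.measure_pos volume hne) (measure_mono ?_)
  rintro h ⟨h0, h1⟩
  have : h ≠ 0 := by rintro rfl; simp at h0
  have h3 := kq_pos h0 h1
  have : 0 < ‖h‖ := norm_pos_iff.2 this
  simp only [Function.mem_support]
  exact (ENNReal.ofReal_pos.2 (by positivity)).ne'

lemma KK_eq {d : ℕ} {s : ℝ} (hs : 0 < s) {e : EuclideanSpace ℝ (Fin d)} (he : ‖e‖ = 1)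
    (ξ : EuclideanSpace ℝ (Fin d)) :
    KK d s ξ = KK d s e * ENNReal.ofReal (‖ξ‖ ^ (2 * s)) := by
  by_cases h : ξ = 0
  · subst h
    rw [norm_zero, Real.zero_rpow (by positivity)]
    simp [KK, kq]
  · have h' : 0 < ‖ξ‖ := norm_pos_iff.2 h
    rw [mul_comm, ← KK_smul s h']
    apply KK_congr_norm
    rw [norm_smul, he]; simp

lemma FT_eq {d : ℕ} (u : SchwartzMap (EuclideanSpace ℝ (Fin d)) ℂ)
    (ξ : EuclideanSpace ℝ (Fin d)) : FT (⇑u) ξ = 𝓕 u ξ := by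
  rw [SchwartzMap.fourier_coe, Real.fourier_eq', FT]
  congr 1; ext x
  rw [smul_eq_mul]
  congr 4; ring

lemma FT_shift {d : ℕ} (u : SchwartzMap (EuclideanSpace ℝ (Fin d)) ℂ)
    (h ξ : EuclideanSpace ℝ (Fin d)) : FT (⇑(u.compSubConstCLM ℂ h)) ξ
      = Complex.exp (Complex.I * ((-(2 * Real.pi * ⟪h, ξ⟫) : ℝ) : ℂ)) * FT u ξ := by
  unfold FT
  rw [← integral_const_mul, ← integral_add_right_eq_self _ h]
  congr 1; ext x
  rw [SchwartzMap.compSubConstCLM_apply, add_sub_cancel_right, ← mul_assoc, ← Complex.exp_add,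
    inner_add_left]
  congr 2; push_cast; ring

lemma schwartz_sq_integrable {d : ℕ} (u : SchwartzMap (EuclideanSpace ℝ (Fin d)) ℂ) :
    Integrable (fun x => ‖u x‖ ^ 2) :=
  (memLp_two_iff_integrable_sq_norm u.continuous.aestronglyMeasurable).1 (u.memLp 2)

lemma planch {d : ℕ} (u : SchwartzMap (EuclideanSpace ℝ (Fin d)) ℂ)
    (h : EuclideanSpace ℝ (Fin d)) :
    ∫⁻ x, ENNReal.ofReal (‖u x - u (x - h)‖ ^ 2)
      = ∫⁻ ξ, ENNReal.ofReal (kq ⟪h, ξ⟫ * ‖FT u ξ‖ ^ 2) := by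
  set v := u.compSubConstCLM ℂ h - u with hv
  have hsub : 𝓕 (u.compSubConstCLM ℂ h - u) = 𝓕 (u.compSubConstCLM ℂ h) - 𝓕 u :=
    map_sub (FourierTransform.fourierCLM ℂ (SchwartzMap (EuclideanSpace ℝ (Fin d)) ℂ)) _ _
  have e1 : ∀ x, ‖u x - u (x - h)‖ ^ 2 = ‖v x‖ ^ 2 := by
    intro x; rw [hv, norm_sub_rev]; rfl
  have e2 : ∀ ξ, kq ⟪h, ξ⟫ * ‖FT u ξ‖ ^ 2 = ‖𝓕 v ξ‖ ^ 2 := by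
    intro ξ
    have : 𝓕 v ξ = (Complex.exp (Complex.I * ((-(2 * Real.pi * ⟪h, ξ⟫) : ℝ) : ℂ)) - 1) * FT u ξ := by
      rw [sub_mul, ← FT_shift, one_mul, FT_eq, FT_eq, hv, hsub]; rfl
    rw [this, norm_mul, mul_pow]; rfl
  simp_rw [e1, e2]
  rw [← ofReal_integral_eq_lintegral_ofReal (schwartz_sq_integrable v) (.of_forall fun x => by positivity),
    ← ofReal_integral_eq_lintegral_ofReal (schwartz_sq_integrable (𝓕 v)) (.of_forall fun x => by positivity),
    SchwartzMap.integral_norm_sq_fourier]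

lemma rhs_integrable {d : ℕ} {s : ℝ} (hs : s ∈ Set.Ioo (0 : ℝ) 1)
    (u : SchwartzMap (EuclideanSpace ℝ (Fin d)) ℂ) :
    Integrable (fun ξ => ‖ξ‖ ^ (2 * s) * ‖FT u ξ‖ ^ 2) := by
  obtain ⟨hs0, hs1⟩ := hs
  simp_rw [FT_eq]
  set v := 𝓕 u
  obtain ⟨C, hC⟩ := v.decay' 0 0
  have hC' : ∀ x, ‖v x‖ ≤ C := by
    intro x
    have := hC x
    simp only [pow_zero, one_mul, norm_iteratedFDeriv_zero] at this
    exact this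
  have hC0 : 0 ≤ C := (norm_nonneg _).trans (hC' 0)
  have i1 := ((v.integrable_pow_mul volume 0).add (v.integrable_pow_mul volume 2)).const_mul C
  have hvc := v.continuous
  refine i1.mono' ?_ (.of_forall fun ξ => ?_)
  · have : Continuous fun ξ : EuclideanSpace ℝ (Fin d) => ‖ξ‖ ^ (2 * s) :=
      continuous_norm.rpow_const (fun _ => Or.inr (by linarith))
    exact (this.mul (by fun_prop)).aestronglyMeasurable
  · rw [Real.norm_of_nonneg (by positivity)]
    have hb : ‖ξ‖ ^ (2 * s) ≤ ‖ξ‖ ^ 0 + ‖ξ‖ ^ 2 := by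
      rcases le_total ‖ξ‖ 1 with h | h
      · have := Real.rpow_le_one (norm_nonneg ξ) h (by linarith : 0 ≤ 2 * s)
        nlinarith [sq_nonneg ‖ξ‖]
      · have := Real.rpow_le_rpow_of_exponent_le h (by linarith : 2 * s ≤ 2)
        rw [Real.rpow_two] at this
        simp; linarith
    calc _ ≤ (‖ξ‖ ^ 0 + ‖ξ‖ ^ 2) * (C * ‖v ξ‖) := by
          rw [sq ‖v ξ‖]; gcongr; exact hC' ξ
      _ = _ := by simp only [Pi.add_apply]; ring

lemma lint_eq {d : ℕ} {s : ℝ} (hs : s ∈ Set.Ioo (0 : ℝ) 1)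
    {e : EuclideanSpace ℝ (Fin d)} (he : ‖e‖ = 1)
    (u : SchwartzMap (EuclideanSpace ℝ (Fin d)) ℂ) :
    ∫⁻ x, ∫⁻ y, ENNReal.ofReal (‖u x - u y‖ ^ 2 / ‖x - y‖ ^ ((d : ℝ) + 2 * s))
      = KK d s e * ENNReal.ofReal (∫ ξ, ‖ξ‖ ^ (2 * s) * ‖FT u ξ‖ ^ 2) := by
  have huc := u.continuous.measurable
  have hkq := kq_cont.measurable
  have hFTm : Measurable (FT u) := by
    rw [show FT u = fun ξ => 𝓕 u ξ from funext (FT_eq u)]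
    exact (𝓕 u).continuous.measurable
  calc _ = ∫⁻ x, ∫⁻ h, ENNReal.ofReal (‖u x - u (x - h)‖ ^ 2 * (‖h‖ ^ ((d : ℝ) + 2 * s))⁻¹) := by
        refine lintegral_congr fun x => ?_
        rw [← lintegral_sub_left_eq_self _ x]
        refine lintegral_congr fun h => ?_
        rw [sub_sub_cancel, div_eq_mul_inv]
    _ = ∫⁻ h, ∫⁻ x, ENNReal.ofReal (‖u x - u (x - h)‖ ^ 2 * (‖h‖ ^ ((d : ℝ) + 2 * s))⁻¹) := by
        rw [lintegral_lintegral_swap]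
        apply Measurable.aemeasurable
        unfold Function.uncurry
        fun_prop
    _ = ∫⁻ h, ∫⁻ ξ, ENNReal.ofReal (kq ⟪h, ξ⟫ * ‖FT u ξ‖ ^ 2 * (‖h‖ ^ ((d : ℝ) + 2 * s))⁻¹) := by
        refine lintegral_congr fun h => ?_
        have a1 : ∀ x, ENNReal.ofReal (‖u x - u (x - h)‖ ^ 2 * (‖h‖ ^ ((d : ℝ) + 2 * s))⁻¹)
          = ENNReal.ofReal (‖u x - u (x - h)‖ ^ 2) * ENNReal.ofReal ((‖h‖ ^ ((d : ℝ) + 2 * s))⁻¹) :=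
          fun x => ENNReal.ofReal_mul (by positivity)
        have a2 : ∀ ξ, ENNReal.ofReal (kq ⟪h, ξ⟫ * ‖FT u ξ‖ ^ 2 * (‖h‖ ^ ((d : ℝ) + 2 * s))⁻¹)
          = ENNReal.ofReal (kq ⟪h, ξ⟫ * ‖FT u ξ‖ ^ 2) * ENNReal.ofReal ((‖h‖ ^ ((d : ℝ) + 2 * s))⁻¹) :=
          fun x => ENNReal.ofReal_mul (mul_nonneg (kq_nonneg _) (by positivity))
        simp_rw [a1, a2]
        rw [lintegral_mul_const _ (by fun_prop), lintegral_mul_const _ (by fun_prop), planch]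
    _ = ∫⁻ ξ, ∫⁻ h, ENNReal.ofReal (kq ⟪h, ξ⟫ * ‖FT u ξ‖ ^ 2 * (‖h‖ ^ ((d : ℝ) + 2 * s))⁻¹) := by
        rw [lintegral_lintegral_swap]
        apply Measurable.aemeasurable
        unfold Function.uncurry
        fun_prop
    _ = ∫⁻ ξ, KK d s e * ENNReal.ofReal (‖ξ‖ ^ (2 * s) * ‖FT u ξ‖ ^ 2) := by
        refine lintegral_congr fun ξ => ?_
        rw [ENNReal.ofReal_mul (by positivity), ← mul_assoc, ← KK_eq hs.1 he, KK,
          ← lintegral_mul_const _ (by fun_prop)]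
        refine lintegral_congr fun h => ?_
        rw [← ENNReal.ofReal_mul (mul_nonneg (kq_nonneg _) (by positivity))]
        congr 1; ring
    _ = _ := by
        rw [lintegral_const_mul _ (by fun_prop), ofReal_integral_eq_lintegral_ofReal
          (rhs_integrable hs u) (.of_forall fun x => by positivity)]

/-- The Gagliardo seminorm equals a constant multiple of the Fourier-side
fractional Sobolev seminorm. -/
theorem gagliardo_eq_fourier (d : ℕ) (hd : 1 ≤ d) (s : ℝ) (hs : s ∈ Set.Ioo (0 : ℝ) 1) :
    ∃ C : ℝ, 0 < C ∧
      ∀ u : SchwartzMap (EuclideanSpace ℝ (Fin d)) ℂ,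
        (∫ x : EuclideanSpace ℝ (Fin d), ∫ y : EuclideanSpace ℝ (Fin d),
            ‖u x - u y‖ ^ 2 / ‖x - y‖ ^ ((d : ℝ) + 2 * s))
        = C * ∫ ξ : EuclideanSpace ℝ (Fin d), ‖ξ‖ ^ (2 * s) * ‖FT (⇑u) ξ‖ ^ 2 := by
  set e : EuclideanSpace ℝ (Fin d) := EuclideanSpace.single ⟨0, hd⟩ 1 with he0
  have he : ‖e‖ = 1 := by simp [he0]
  have hfin := KK_lt_top hd hs e
  refine ⟨(KK d s e).toReal, ENNReal.toReal_pos (KK_pos s he).ne' hfin.ne, fun u => ?_⟩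
  have huc := u.continuous.measurable
  have hl := lint_eq hs he u
  have hin : ∀ x, ∫ y, ‖u x - u y‖ ^ 2 / ‖x - y‖ ^ ((d : ℝ) + 2 * s)
      = (∫⁻ y, ENNReal.ofReal (‖u x - u y‖ ^ 2 / ‖x - y‖ ^ ((d : ℝ) + 2 * s))).toReal := fun x =>
    integral_eq_lintegral_of_nonneg_ae (.of_forall fun y => by positivity)
      (Measurable.aestronglyMeasurable (by fun_prop))
  have hm : Measurable fun x => ∫⁻ y, ENNReal.ofReal (‖u x - u y‖ ^ 2 / ‖x - y‖ ^ ((d : ℝ) + 2 * s)) := by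
    apply Measurable.lintegral_prod_right
    unfold Function.uncurry
    fun_prop
  simp_rw [hin]
  rw [integral_toReal hm.aemeasurable, hl, ENNReal.toReal_mul, ENNReal.toReal_ofReal]
  · exact integral_nonneg fun x => by positivity
  · apply ae_lt_top hm
    rw [hl]
    exact ENNReal.mul_ne_top hfin.ne ENNReal.ofReal_ne_top
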